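/- Pruning correspondence for simple Hurwitz numbers: for all (g,n) ≠ (0,1) with g ≥ 0, n ≥ 1, and all positive integers μ = (μ_1,…,μ_n), one has Ĥ_{g,n}(μ_1,…,μ_n) = Σ_{ν_1=1}^{μ_1} ⋯ Σ_{ν_n=1}^{μ_n} K̂_{g,n}(ν_1,…,ν_n) · Π_{i=1}^{n} μ_i^{μ_i−ν_i}/(μ_i−ν_i)!. -/

import Mathlib

/-- `σ` is a tuple of `m` transpositions in the symmetric group on `d` letters whose
ordered product is `T` and which generates a subgroup acting transitively.  These are
the objects counted by the simple Hurwitz numbers. -/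
def IsSimpleFactorisation {d m : ℕ} (T : Equiv.Perm (Fin d))
    (σ : Fin m → Equiv.Perm (Fin d)) : Prop :=
  (∀ i, (σ i).IsSwap) ∧
  (List.ofFn σ).prod = T ∧
  (∀ x y : Fin d, ∃ g ∈ Subgroup.closure (Set.range σ), g x = y)

/-- A pruned factorisation additionally moves every point by at least two of the
transpositions. -/
def IsPrunedFactorisation {d m : ℕ} (T : Equiv.Perm (Fin d))
    (σ : Fin m → Equiv.Perm (Fin d)) : Prop :=
  IsSimpleFactorisation T σ ∧
  (∀ x : Fin d, 2 ≤ Nat.card {i : Fin m // σ i x ≠ x})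

/-- `H g μ` is the normalised simple Hurwitz number `Ĥ_{g,n}(μ)`: the number of
factorisations of a permutation `T` of cycle type `μ` into `m = 2g - 2 + n + |μ|`
transpositions generating a transitive subgroup, divided by `m!`; this count is the
same for every `T` of cycle type `μ`. -/
def IsNormalisedSimpleHurwitz (H : ℕ → Multiset ℕ → ℚ) : Prop :=
  ∀ (g : ℕ) (μ : Multiset ℕ), (∀ x ∈ μ, 1 ≤ x) →
    ∀ T : Equiv.Perm (Fin μ.sum), T.cycleType = μ.filter (fun x => 2 ≤ x) →
      H g μ =
        (Nat.card {σ : Fin (2 * g + Multiset.card μ + μ.sum - 2) → Equiv.Perm (Fin μ.sum) //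
            IsSimpleFactorisation T σ} : ℚ) /
          Nat.factorial (2 * g + Multiset.card μ + μ.sum - 2)

/-- `K g μ` is the normalised pruned simple Hurwitz number `K̂_{g,n}(μ)`. -/
def IsNormalisedPrunedHurwitz (K : ℕ → Multiset ℕ → ℚ) : Prop :=
  ∀ (g : ℕ) (μ : Multiset ℕ), (∀ x ∈ μ, 1 ≤ x) →
    ∀ T : Equiv.Perm (Fin μ.sum), T.cycleType = μ.filter (fun x => 2 ≤ x) →
      K g μ =
        (Nat.card {σ : Fin (2 * g + Multiset.card μ + μ.sum - 2) → Equiv.Perm (Fin μ.sum) //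
            IsPrunedFactorisation T σ} : ℚ) /
          Nat.factorial (2 * g + Multiset.card μ + μ.sum - 2)

namespace Pruning
open Equiv Finset

set_option linter.unusedSectionVars false
set_option linter.unusedVariables false

section
variable {α : Type} [DecidableEq α] [Fintype α]

lemma app_inv (A : Perm α) (z : α) : A (A⁻¹ z) = z := Equiv.apply_symm_apply A z

lemma inv_app (A : Perm α) (z : α) : A⁻¹ (A z) = z := Equiv.symm_apply_apply A z

def deg (x : α) (w : List (Perm α)) : ℕ := w.countP (fun s => decide (s x ≠ x))

structure IsFac (C : Finset α) (T : Perm α) (w : List (Perm α)) : Prop where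
  swaps : ∀ s ∈ w, s.IsSwap
  supp : ∀ s ∈ w, ∀ a, a ∉ C → s a = a
  prod : w.prod = T
  conn : ∀ U : Set α, (∀ s ∈ w, ∀ u ∈ U, s u ∈ U) → ∀ a ∈ C, a ∈ U → ∀ b ∈ C, b ∈ U

open Classical in
noncomputable def Fac (C : Finset α) (T : Perm α) (m : ℕ) : Finset (List (Perm α)) :=
  (List.finite_length_eq (Perm α) m).toFinset.filter (IsFac C T)

lemma mem_Fac {C : Finset α} {T : Perm α} {m : ℕ} {w : List (Perm α)} :
    w ∈ Fac C T m ↔ w.length = m ∧ IsFac C T w := by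
  simp [Fac]

def ins (x z : α) (p : ℕ) (w : List (Perm α)) : List (Perm α) :=
  w.take p ++ swap x ((w.take p).prod⁻¹ z) :: w.drop p

lemma prod_fix {x : α} {w : List (Perm α)} (h : ∀ s ∈ w, s x = x) : w.prod x = x := by
  induction w with
  | nil => simp
  | cons s w ih =>
    simp only [List.prod_cons, Perm.mul_apply]
    rw [ih (fun t ht => h t (by simp [ht])), h s (by simp)]

lemma deg_append (x : α) (u v : List (Perm α)) : deg x (u ++ v) = deg x u + deg x v := by
  simp [deg]

lemma deg_cons (x : α) (s : Perm α) (v : List (Perm α)) :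
    deg x (s :: v) = deg x v + if s x ≠ x then 1 else 0 := by
  simp [deg, List.countP_cons]

lemma deg_eq_zero {x : α} {w : List (Perm α)} : deg x w = 0 ↔ ∀ s ∈ w, s x = x := by
  simp [deg, List.countP_eq_zero]

lemma deg_one_split {x : α} {w : List (Perm α)} (h : deg x w = 1) :
    ∃ A s B, w = A ++ s :: B ∧ deg x A = 0 ∧ deg x B = 0 ∧ s x ≠ x := by
  induction w with
  | nil => simp [deg] at h
  | cons t w ih =>
    rw [deg_cons] at h
    by_cases ht : t x ≠ x
    · rw [if_pos ht] at h
      exact ⟨[], t, w, by simp, by simp [deg], by omega, ht⟩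
    · rw [if_neg ht] at h
      obtain ⟨A, s, B, rfl, hA, hB, hs⟩ := ih (by omega)
      refine ⟨t :: A, s, B, by simp, ?_, hB, hs⟩
      rw [deg_cons, if_neg ht, hA]

lemma split_unique {x : α} {A A' B B' : List (Perm α)} {s s' : Perm α}
    (hA : deg x A = 0) (hA' : deg x A' = 0)
    (hs : s x ≠ x) (hs' : s' x ≠ x) (h : A ++ s :: B = A' ++ s' :: B') :
    A = A' ∧ s = s' ∧ B = B' := by
  induction A generalizing A' with
  | nil =>
    cases A' with
    | nil => simpa using h
    | cons t A' =>
      simp at h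
      rw [deg_eq_zero] at hA'
      exact absurd (hA' t (by simp)) (h.1 ▸ hs)
  | cons t A ih =>
    cases A' with
    | nil =>
      simp at h
      rw [deg_eq_zero] at hA
      exact absurd (hA t (by simp)) (h.1 ▸ hs')
    | cons t' A' =>
      simp only [List.cons_append, List.cons.injEq] at h
      rw [deg_cons] at hA hA'
      obtain ⟨h1, h2, h3⟩ := ih (A' := A') (by omega) (by omega) h.2
      exact ⟨by rw [h.1, h1], h2, h3⟩

lemma deg_ins {x z : α} {p : ℕ} {w : List (Perm α)} {v : α} (hv : v ≠ x) :
    deg v (ins x z p w) = deg v w + if v = (w.take p).prod⁻¹ z then 1 else 0 := by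
  have h : deg v w = deg v (w.take p) + deg v (w.drop p) := by
    rw [← deg_append, List.take_append_drop]
  rw [ins, deg_append, deg_cons, h]
  have : (swap x ((w.take p).prod⁻¹ z) v ≠ v) ↔ v = (w.take p).prod⁻¹ z := by
    constructor
    · intro h
      by_contra h'
      exact h (swap_apply_of_ne_of_ne hv h')
    · intro h
      rw [← h, swap_apply_right]
      exact hv.symm
  simp only [this]
  omega

/-- properties of the letters of a factorisation of the reduced permutation -/
lemma reduced_fix {C : Finset α} {x : α} {T : Perm α} {w : List (Perm α)}
    (h : IsFac (C.erase x) T w) : ∀ s ∈ w, s x = x :=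
  fun s hs => h.supp s hs x (by simp)

lemma inv_prod_ne {x z : α} {w : List (Perm α)} (h : ∀ s ∈ w, s x = x) (hz : z ≠ x) (p : ℕ) :
    (w.take p).prod⁻¹ z ≠ x := by
  intro h'
  rw [Perm.inv_eq_iff_eq] at h'
  rw [prod_fix (fun s hs => h s (List.mem_of_mem_take hs))] at h'
  exact hz h'

lemma prod_mem {C : Finset α} {w : List (Perm α)} (h : ∀ s ∈ w, ∀ a, a ∉ C → s a = a)
    {z : α} (hz : z ∈ C) : w.prod⁻¹ z ∈ C := by
  by_contra h'
  have := prod_fix (x := w.prod⁻¹ z) (w := w) (fun s hs => h s hs _ h')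
  rw [app_inv] at this
  rw [← this] at h'
  exact h' hz

lemma deg_ins_self {x z : α} {w : List (Perm α)} (h : ∀ s ∈ w, s x = x) (hz : z ≠ x) (p : ℕ) :
    deg x (ins x z p w) = 1 := by
  rw [ins, deg_append, deg_cons, deg_eq_zero.2 (fun s hs => h s (List.mem_of_mem_take hs)),
    deg_eq_zero.2 (fun s hs => h s (List.mem_of_mem_drop hs)), if_pos]
  rw [swap_apply_left]
  exact inv_prod_ne h hz p

lemma conj_swap (A : Perm α) (x z : α) (hA : A x = x) : A * swap x (A⁻¹ z) = swap x z * A := by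
  have := Equiv.mul_swap_eq_swap_mul A x (A⁻¹ z)
  rw [this, hA, app_inv]

lemma ins_mem {C : Finset α} {T : Perm α} {x : α} {m p : ℕ} {w : List (Perm α)}
    (hx : x ∈ C) (hTC : ∀ a, a ∉ C → T a = a) (hTx : T x ≠ x)
    (hw : w ∈ Fac (C.erase x) (swap x (T x) * T) m) (hp : p ≤ m) :
    ins x (T x) p w ∈ Fac C T (m + 1) := by
  rw [mem_Fac] at hw ⊢
  obtain ⟨hl, hf⟩ := hw
  have hfix := reduced_fix hf
  have hTxC : T x ∈ C := by
    by_contra h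
    exact hTx (T.injective (hTC _ h))
  have hy := inv_prod_ne hfix hTx p
  set y := (w.take p).prod⁻¹ (T x) with hydef
  have hyC : y ∈ C.erase x :=
    prod_mem (fun s hs => hf.supp s (List.mem_of_mem_take hs)) (by simp [hTx, hTxC])
  have hyC' : y ∈ C := (Finset.mem_erase.1 hyC).2
  have hmem : ∀ s, s ∈ ins x (T x) p w ↔ s ∈ w ∨ s = swap x y := by
    intro s
    rw [ins, List.mem_append, List.mem_cons, ← hydef]
    conv_rhs => rw [← List.take_append_drop p w, List.mem_append]
    tauto
  refine ⟨?_, ?_, ?_, ?_, ?_⟩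
  · simp [ins, hl]; omega
  · intro s hs
    rcases (hmem s).1 hs with h | h
    · exact hf.swaps s h
    · exact ⟨x, y, hy.symm, h⟩
  · intro s hs a ha
    rcases (hmem s).1 hs with h | h
    · exact hf.supp s h a (by simp [ha])
    · rw [h, swap_apply_of_ne_of_ne]
      · rintro rfl; exact ha hx
      · rintro rfl; exact ha hyC'
  · rw [ins, List.prod_append, List.prod_cons, ← mul_assoc, conj_swap _ _ _
      (prod_fix (fun s hs => hfix s (List.mem_of_mem_take hs))), mul_assoc,
      ← List.prod_append, List.take_append_drop, hf.prod, ← mul_assoc, swap_mul_self, one_mul]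
  · intro U hU a ha haU b hb
    have hUw : ∀ s ∈ w, ∀ u ∈ U, s u ∈ U := fun s hs => hU s ((hmem s).2 (Or.inl hs))
    have hUs := hU (swap x y) ((hmem _).2 (Or.inr rfl))
    have hall : ∀ c ∈ C.erase x, c ∈ U := by
      by_cases hax : a = x
      · subst hax
        have : y ∈ U := by simpa using hUs a haU
        exact hf.conn U hUw y hyC this
      · exact hf.conn U hUw a (by simp [hax, ha]) haU
    by_cases hbx : b = x
    · rw [hbx]; simpa using hUs y (hall y hyC)
    · exact hall b (by simp [hbx, hb])

lemma ins_surj {C : Finset α} {T : Perm α} {x : α} {m : ℕ} {w : List (Perm α)}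
    (hx : x ∈ C) (hw : w ∈ Fac C T (m + 1)) (hd : deg x w = 1) :
    T x ≠ x ∧ ∃ p ≤ m, ∃ w' ∈ Fac (C.erase x) (swap x (T x) * T) m, ins x (T x) p w' = w := by
  rw [mem_Fac] at hw
  obtain ⟨hl, hf⟩ := hw
  obtain ⟨A, s, B, rfl, hA, hB, hs⟩ := deg_one_split hd
  rw [deg_eq_zero] at hA hB
  obtain ⟨a, b, hab, hsw⟩ := hf.swaps s (by simp)
  have hsx : s = swap x (s x) := by
    subst hsw
    rcases eq_or_ne x a with rfl | hxa
    · simp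
    · rcases eq_or_ne x b with rfl | hxb
      · simp [swap_comm]
      · exact absurd (swap_apply_of_ne_of_ne hxa hxb) hs
  have hsxC : s x ∈ C := by
    by_contra h
    exact hs (s.injective (hf.supp s (by simp) _ h))
  set y := s x with hy
  have hAx := prod_fix hA
  have hBx := prod_fix hB
  have hTx : T x = A.prod y := by
    rw [← hf.prod]
    simp only [List.prod_append, List.prod_cons, Perm.mul_apply, hBx, hy]
  have hTx' : A.prod⁻¹ (T x) = y := by rw [hTx, inv_app]
  have hne : T x ≠ x := by
    rw [hTx]; intro h
    exact hs (A.prod.injective (h.trans hAx.symm))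
  refine ⟨hne, A.length, ?_, A ++ B, ?_, ?_⟩
  · simp at hl; omega
  · rw [mem_Fac]
    refine ⟨by simp at hl ⊢; omega, ?_, ?_, ?_, ?_⟩
    · intro t ht
      exact hf.swaps t (by simp at ht ⊢; tauto)
    · intro t ht c hc
      by_cases hcx : c = x
      · subst hcx
        rcases List.mem_append.1 ht with h | h
        · exact hA t h
        · exact hB t h
      · exact hf.supp t (by simp at ht ⊢; tauto) c (by simpa [hcx] using hc)
    · have h1 := conj_swap A.prod x (T x) hAx
      rw [hTx', ← hsx] at h1
      have h2 : swap x (T x) * (A.prod * B.prod) = T := by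
        rw [← mul_assoc, ← h1]
        conv_rhs => rw [← hf.prod]
        simp [mul_assoc]
      rw [List.prod_append]
      calc A.prod * B.prod = swap x (T x) * (swap x (T x) * (A.prod * B.prod)) := by
            rw [swap_mul_self_mul]
        _ = _ := by rw [h2]
    · intro U hU c hc hcU d hd'
      have := hf.conn ({u | u ∈ U ∧ u ≠ x} ∪ {u | u = x ∧ y ∈ U}) ?_ c
        (Finset.mem_of_mem_erase hc) (Or.inl ⟨hcU, (Finset.mem_erase.1 hc).1⟩) d
        (Finset.mem_of_mem_erase hd')
      · rcases this with h | h
        · exact h.1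
        · exact absurd h.1 (Finset.mem_erase.1 hd').1
      · have key : ∀ t, t ∈ A ++ B → ∀ u, u ∈ ({u | u ∈ U ∧ u ≠ x} ∪ {u | u = x ∧ y ∈ U} : Set α)
            → t u ∈ ({u | u ∈ U ∧ u ≠ x} ∪ {u | u = x ∧ y ∈ U} : Set α) := by
          intro t ht u hu
          have htx : t x = x := by
            rcases List.mem_append.1 ht with h | h
            · exact hA t h
            · exact hB t h
          rcases hu with ⟨h1, h2⟩ | ⟨rfl, h2⟩
          · left
            refine ⟨hU t ht u h1, fun h => h2 (t.injective (h.trans htx.symm))⟩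
          · right; exact ⟨htx, h2⟩
        intro t ht u hu
        simp only [List.mem_append, List.mem_cons] at ht
        rcases ht with h | h | h
        · exact key t (by simp [h]) u hu
        · rw [h, hsx]
          rcases hu with ⟨h1, h2⟩ | ⟨rfl, h2⟩
          · by_cases huy : u = y
            · right; rw [huy, swap_apply_right]; exact ⟨rfl, huy ▸ h1⟩
            · left; rw [swap_apply_of_ne_of_ne h2 huy]; exact ⟨h1, h2⟩
          · left; rw [swap_apply_left]; exact ⟨h2, hs⟩
        · exact key t (by simp [h]) u hu
  · rw [ins]
    simp only [List.take_left, List.drop_left]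
    rw [hTx', ← hsx]

lemma sum_leaf {C : Finset α} {T : Perm α} {x : α} {m : ℕ}
    (hx : x ∈ C) (hTC : ∀ a, a ∉ C → T a = a) (hTx : T x ≠ x) (f : List (Perm α) → ℚ) :
    ∑ w ∈ (Fac C T (m + 1)).filter (fun w => deg x w = 1), f w =
      ∑ w ∈ Fac (C.erase x) (swap x (T x) * T) m, ∑ p ∈ range (m + 1), f (ins x (T x) p w) := by
  rw [← Finset.sum_product']
  symm
  refine Finset.sum_bij (fun q _ => ins x (T x) q.2 q.1) ?_ ?_ ?_ ?_
  · rintro ⟨w, p⟩ hq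
    simp only [mem_product, Finset.mem_range, mem_filter] at hq ⊢
    refine ⟨ins_mem hx hTC hTx hq.1 (by omega), ?_⟩
    exact deg_ins_self (reduced_fix (mem_Fac.1 hq.1).2) hTx _
  · rintro ⟨w, p⟩ hq ⟨w', p'⟩ hq' h
    simp only [mem_product, Finset.mem_range] at hq hq'
    have h1 := mem_Fac.1 hq.1
    have h2 := mem_Fac.1 hq'.1
    have f1 := reduced_fix h1.2
    have f2 := reduced_fix h2.2
    simp only [ins] at h
    obtain ⟨hA, -, hB⟩ := split_unique (x := x)
      (deg_eq_zero.2 (fun s hs => f1 s (List.mem_of_mem_take hs)))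
      (deg_eq_zero.2 (fun s hs => f2 s (List.mem_of_mem_take hs)))
      (by rw [swap_apply_left]; exact inv_prod_ne f1 hTx p)
      (by rw [swap_apply_left]; exact inv_prod_ne f2 hTx p') h
    have hw : w = w' := by
      rw [← List.take_append_drop p w, hA, hB, List.take_append_drop]
    have hp : p = p' := by
      have := congrArg List.length hA
      simp at this
      omega
    rw [hw, hp]
  · intro w hw
    rw [mem_filter] at hw
    obtain ⟨-, p, hp, w', hw', rfl⟩ := ins_surj hx hw.1 hw.2
    exact ⟨(w', p), by simp [hw']; omega, rfl⟩
  · intros; rfl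

structure Dat {n : ℕ} (C : Finset α) (T : Perm α) (lab : α → Fin n) : Prop where
  fix : ∀ a, a ∉ C → T a = a
  lab_eq : ∀ a, lab (T a) = lab a
  cyc : ∀ U : Set α, (∀ u ∈ U, T u ∈ U) → ∀ a ∈ C, a ∈ U → ∀ b ∈ C, lab b = lab a → b ∈ U

def fib {n : ℕ} (C : Finset α) (lab : α → Fin n) (i : Fin n) : ℕ :=
  #(C.filter (fun a => lab a = i))

def SS {n : ℕ} (C : Finset α) (lab : α → Fin n) (j : Fin n → ℕ) : Finset (Finset α) :=
  C.powerset.filter (fun S => ∀ i, fib S lab i = j i)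

def IsL (w : List (Perm α)) (S : Finset α) : Prop := ∀ z ∈ S, deg z w = 1

instance (w : List (Perm α)) (S : Finset α) : Decidable (IsL w S) := by
  unfold IsL; infer_instance

noncomputable def Y {n : ℕ} (C : Finset α) (T : Perm α) (lab : α → Fin n) (m : ℕ)
    (j : Fin n → ℕ) : ℚ :=
  ∑ w ∈ Fac C T m, ∑ S ∈ SS C lab j, if IsL w S then 1 else 0

def cj (T : Perm α) (w : List (Perm α)) : List (Perm α) := w.map (fun s => T * s * T⁻¹)

lemma deg_cj (T : Perm α) (w : List (Perm α)) (z : α) : deg (T z) (cj T w) = deg z w := by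
  simp only [deg, cj, List.countP_map]
  congr 1
  funext s
  simp [Function.comp]

lemma cj_take (T : Perm α) (w : List (Perm α)) (p : ℕ) :
    (cj T w).take p = cj T (w.take p) := by
  simp [cj, List.map_take]

lemma cj_inj (T : Perm α) : Function.Injective (cj T) := by
  apply List.map_injective_iff.2
  intro a b h
  simpa using h

lemma cj_prod (T : Perm α) (w : List (Perm α)) : (cj T w).prod = T * w.prod * T⁻¹ := by
  induction w with
  | nil => simp [cj]
  | cons s w ih =>
    simp only [cj, List.map_cons, List.prod_cons] at ih ⊢
    rw [ih]; group

lemma Dat.mem {n : ℕ} {C : Finset α} {T : Perm α} {lab : α → Fin n} (hD : Dat C T lab) {a : α} :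
    T a ∈ C ↔ a ∈ C := by
  constructor
  · intro h
    by_contra h'
    rw [hD.fix a h'] at h
    exact h' h
  · intro h
    by_contra h'
    have := T.injective (hD.fix _ h')
    rw [this] at h'
    exact h' h

lemma cj_mem {n : ℕ} {C : Finset α} {T : Perm α} {lab : α → Fin n} (hD : Dat C T lab) {m : ℕ}
    {w : List (Perm α)} (hw : w ∈ Fac C T m) : cj T w ∈ Fac C T m := by
  rw [mem_Fac] at hw ⊢
  obtain ⟨hl, hf⟩ := hw
  refine ⟨by simpa [cj] using hl, ?_, ?_, ?_, ?_⟩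
  · intro s hs
    obtain ⟨t, ht, rfl⟩ := List.mem_map.1 hs
    obtain ⟨a, b, hab, rfl⟩ := hf.swaps t ht
    refine ⟨T a, T b, fun h => hab (T.injective h), ?_⟩
    rw [Equiv.mul_swap_eq_swap_mul]; group
  · intro s hs a ha
    obtain ⟨t, ht, rfl⟩ := List.mem_map.1 hs
    have h1 : T⁻¹ a ∉ C := by rw [← hD.mem, app_inv]; exact ha
    simp only [Perm.mul_apply]
    rw [hf.supp t ht _ h1, app_inv]
  · rw [cj_prod, hf.prod]; group
  · intro U hU a ha haU b hb
    have := hf.conn {u | T u ∈ U} ?_ (T⁻¹ a) (by rw [← hD.mem, app_inv]; exact ha)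
      (by simpa using haU) (T⁻¹ b) (by rw [← hD.mem, app_inv]; exact hb)
    · simpa using this
    · intro s hs u hu
      have := hU (T * s * T⁻¹) (List.mem_map.2 ⟨s, hs, rfl⟩) (T u) hu
      simpa using this

lemma sum_inj {β : Type} [DecidableEq β] (s : Finset β) (e : β → β) (he : Function.Injective e)
    (hs : ∀ a ∈ s, e a ∈ s) (f : β → ℚ) : ∑ a ∈ s, f (e a) = ∑ a ∈ s, f a := by
  have h : s.image e = s := by
    apply Finset.eq_of_subset_of_card_le
    · intro b hb
      obtain ⟨a, ha, rfl⟩ := Finset.mem_image.1 hb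
      exact hs a ha
    · rw [Finset.card_image_of_injective _ he]
  conv_rhs => rw [← h]
  rw [Finset.sum_image (fun a _ b _ h => he h)]

lemma map_mem_SS {n : ℕ} {C : Finset α} {T : Perm α} {lab : α → Fin n} (hD : Dat C T lab)
    {j : Fin n → ℕ} {S : Finset α} (hS : S ∈ SS C lab j) : S.map T.toEmbedding ∈ SS C lab j := by
  simp only [SS, mem_filter, mem_powerset] at hS ⊢
  refine ⟨?_, ?_⟩
  · intro a ha
    obtain ⟨b, hb, rfl⟩ := Finset.mem_map.1 ha
    exact hD.mem.2 (hS.1 hb)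
  · intro i
    rw [← hS.2 i, fib, fib, Finset.filter_map, Finset.card_map]
    congr 1
    ext a
    simp [hD.lab_eq]

lemma sum_conj {n : ℕ} {C : Finset α} {T : Perm α} {lab : α → Fin n} (hD : Dat C T lab)
    (m : ℕ) (j : Fin n → ℕ) (f : List (Perm α) → Finset α → ℚ) :
    ∑ w ∈ Fac C T m, ∑ S ∈ SS C lab j, f (cj T w) (S.map T.toEmbedding) =
      ∑ w ∈ Fac C T m, ∑ S ∈ SS C lab j, f w S := by
  rw [sum_inj (Fac C T m) (cj T) (cj_inj T) (fun w hw => cj_mem hD hw)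
    (fun w => ∑ S ∈ SS C lab j, f w (S.map T.toEmbedding))]
  refine Finset.sum_congr rfl (fun w _ => ?_)
  exact sum_inj (SS C lab j) (fun S => S.map T.toEmbedding) (Finset.map_injective _)
    (fun S hS => map_mem_SS hD hS) (fun S => f w S)

lemma IsL_cj (T : Perm α) (w : List (Perm α)) (S : Finset α) :
    IsL (cj T w) (S.map T.toEmbedding) ↔ IsL w S := by
  simp only [IsL, Finset.forall_mem_map, Equiv.coe_toEmbedding, deg_cj]

lemma prefix_leaf {w : List (Perm α)} {y : α} (hy : deg y w = 1) (p : ℕ) :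
    (w.take p).prod y = if deg y (w.take p) = 0 then y else w.prod y := by
  split_ifs with h
  · exact prod_fix (deg_eq_zero.1 h)
  · have h1 : deg y w = deg y (w.take p) + deg y (w.drop p) := by
      rw [← deg_append, List.take_append_drop]
    have h2 : deg y (w.drop p) = 0 := by omega
    conv_rhs => rw [← List.take_append_drop p w, List.prod_append, Perm.mul_apply,
      prod_fix (deg_eq_zero.1 h2)]

lemma bad_point {w : List (Perm α)} {S : Finset α} (hL : IsL w S) (z : α) (p : ℕ) :
    (if (w.take p).prod⁻¹ z ∈ S then (1 : ℚ) else 0) =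
      (if z ∈ S ∧ deg z (w.take p) = 0 then 1 else 0) +
      (if w.prod⁻¹ z ∈ S ∧ deg (w.prod⁻¹ z) (w.take p) ≠ 0 then 1 else 0) := by
  by_cases h1 : z ∈ S ∧ deg z (w.take p) = 0
  · have e := prefix_leaf (hL z h1.1) p
    rw [if_pos h1.2] at e
    have e' : (w.take p).prod⁻¹ z = z := by rw [Perm.inv_eq_iff_eq, e]
    rw [if_pos h1, e', if_pos h1.1, if_neg]
    · simp
    · rintro ⟨h2, h3⟩
      have e2 := prefix_leaf (hL _ h2) p
      rw [if_neg h3, app_inv] at e2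
      have : w.prod⁻¹ z = z := (w.take p).prod.injective (e2.trans e.symm)
      rw [this] at h3
      exact h3 h1.2
  · rw [if_neg h1, zero_add]
    congr 1
    apply propext
    constructor
    · intro h
      have e := prefix_leaf (hL _ h) p
      rw [app_inv] at e
      split_ifs at e with h2
      · rw [← e] at h h2; exact absurd ⟨h, h2⟩ h1
      · have : w.prod⁻¹ z = (w.take p).prod⁻¹ z := by rw [Perm.inv_eq_iff_eq]; exact e
        rw [this]; exact ⟨h, h2⟩
    · rintro ⟨h2, h3⟩
      have e2 := prefix_leaf (hL _ h2) p
      rw [if_neg h3, app_inv] at e2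
      have : (w.take p).prod⁻¹ z = w.prod⁻¹ z := by rw [Perm.inv_eq_iff_eq]; exact e2.symm
      rw [this]; exact h2

lemma bad_sum {n : ℕ} {C : Finset α} {T : Perm α} {lab : α → Fin n} (hD : Dat C T lab)
    (m M : ℕ) (j : Fin n → ℕ) (z : α) :
    ∑ w ∈ Fac C T m, ∑ S ∈ SS C lab j,
      (if IsL w S then ∑ p ∈ range M, (if (w.take p).prod⁻¹ z ∈ S then (1 : ℚ) else 0) else 0) =
    M * ∑ w ∈ Fac C T m, ∑ S ∈ SS C lab j, (if IsL w S ∧ z ∈ S then (1 : ℚ) else 0) := by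
  have h1 : ∀ w ∈ Fac C T m, ∀ S ∈ SS C lab j,
      (if IsL w S then ∑ p ∈ range M, (if (w.take p).prod⁻¹ z ∈ S then (1 : ℚ) else 0) else 0) =
      (if IsL w S then ∑ p ∈ range M,
          (if z ∈ S ∧ deg z (w.take p) = 0 then (1 : ℚ) else 0) else 0) +
      (fun (w : List (Perm α)) (S : Finset α) => if IsL w S then ∑ p ∈ range M,
          (if z ∈ S ∧ deg z (w.take p) ≠ 0 then (1 : ℚ) else 0) else 0)
          (cj T w) (S.map T.toEmbedding) := by
    intro w hw S hS
    have hp := (mem_Fac.1 hw).2.prod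
    simp only [IsL_cj]
    split_ifs with hL
    · rw [← Finset.sum_add_distrib]
      refine Finset.sum_congr rfl (fun p _ => ?_)
      rw [bad_point hL z p, hp, cj_take]
      congr 2
      have e : deg (T⁻¹ z) (w.take p) = deg z (cj T (w.take p)) := by
        rw [← deg_cj T, app_inv]
      rw [e]
      have e2 : z ∈ S.map T.toEmbedding ↔ T⁻¹ z ∈ S := by
        simp only [Finset.mem_map, Equiv.coe_toEmbedding]
        constructor
        · rintro ⟨a, ha, rfl⟩; simpa using ha
        · intro h; exact ⟨_, h, app_inv _ _⟩
      rw [e2]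
    · simp
  rw [Finset.sum_congr rfl (fun w hw => Finset.sum_congr rfl (h1 w hw))]
  simp only [Finset.sum_add_distrib]
  rw [sum_conj hD m j (fun (w : List (Perm α)) (S : Finset α) => if IsL w S then ∑ p ∈ range M,
          (if z ∈ S ∧ deg z (w.take p) ≠ 0 then (1 : ℚ) else 0) else 0)]
  rw [← Finset.sum_add_distrib, Finset.mul_sum]
  refine Finset.sum_congr rfl (fun w _ => ?_)
  rw [← Finset.sum_add_distrib, Finset.mul_sum]
  refine Finset.sum_congr rfl (fun S _ => ?_)
  by_cases hL : IsL w S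
  · simp only [hL, if_true, true_and]
    rw [← Finset.sum_add_distrib]
    by_cases hz : z ∈ S
    · simp only [hz, true_and, if_true]
      rw [Finset.sum_congr rfl (g := fun _ => (1 : ℚ))]
      · simp
      · intro p _
        split_ifs <;> simp_all
    · simp [hz]
  · simp [hL]

lemma average {n : ℕ} {C : Finset α} {T : Perm α} {lab : α → Fin n} (hD : Dat C T lab)
    (m : ℕ) (j : Fin n → ℕ) {z : α} (hz : z ∈ C) :
    (fib C lab (lab z) : ℚ) *
      ∑ w ∈ Fac C T m, ∑ S ∈ SS C lab j, (if IsL w S ∧ z ∈ S then (1 : ℚ) else 0) =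
    j (lab z) * Y C T lab m j := by
  set N : α → ℚ := fun z =>
    ∑ w ∈ Fac C T m, ∑ S ∈ SS C lab j, (if IsL w S ∧ z ∈ S then (1 : ℚ) else 0) with hN
  have hT : ∀ a, N (T a) = N a := by
    intro a
    simp only [hN]
    rw [← sum_conj hD]
    simp only [IsL_cj]
    simp
  have hc : ∀ b ∈ C.filter (fun a => lab a = lab z), N b = N z := by
    intro b hb
    rw [mem_filter] at hb
    exact hD.cyc {b | N b = N z} (fun u hu => (hT u).trans hu) z hz rfl b hb.1 hb.2
  change (fib C lab (lab z) : ℚ) * N z = _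
  have h1 : (fib C lab (lab z) : ℚ) * N z = ∑ b ∈ C.filter (fun a => lab a = lab z), N b := by
    rw [Finset.sum_congr rfl hc]; simp [fib]
  rw [h1]
  simp only [hN]
  rw [Finset.sum_comm, Y, Finset.mul_sum]
  refine Finset.sum_congr rfl (fun w _ => ?_)
  rw [Finset.sum_comm, Finset.mul_sum]
  refine Finset.sum_congr rfl (fun S hS => ?_)
  by_cases hL : IsL w S
  · simp only [hL, true_and, if_true, mul_one]
    simp only [SS, mem_filter, mem_powerset] at hS
    rw [← hS.2, fib, Finset.sum_ite_mem, Finset.sum_const, nsmul_eq_mul, mul_one]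
    congr 2
    ext a
    simp only [mem_inter, mem_filter]
    constructor
    · rintro ⟨⟨_, h⟩, h'⟩; exact ⟨h', h⟩
    · rintro ⟨h, h'⟩; exact ⟨⟨hS.1 h, h'⟩, h⟩
  · simp [hL]

lemma sum_SS_mem {n : ℕ} {C : Finset α} {lab : α → Fin n} {j j' : Fin n → ℕ} {x : α} (hx : x ∈ C)
    (hj : ∀ k, j k = j' k + if lab x = k then 1 else 0) (f : Finset α → ℚ) :
    ∑ S ∈ SS C lab j, (if x ∈ S then f S else 0) =
      ∑ S ∈ SS (C.erase x) lab j', f (insert x S) := by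
  have hfib : ∀ S : Finset α, x ∉ S → ∀ k,
      fib (insert x S) lab k = fib S lab k + if lab x = k then 1 else 0 := by
    intro S hS k
    simp only [fib, Finset.filter_insert]
    split_ifs with h
    · rw [Finset.card_insert_of_notMem (by simp [hS])]
    · rfl
  rw [← Finset.sum_filter]
  symm
  refine Finset.sum_bij (fun S _ => insert x S) ?_ ?_ ?_ ?_
  · intro S hS
    simp only [SS, mem_filter, mem_powerset] at hS ⊢
    have hxS : x ∉ S := fun h => by simpa using hS.1 h
    refine ⟨⟨?_, ?_⟩, by simp⟩
    · exact Finset.insert_subset hx (hS.1.trans (Finset.erase_subset _ _))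
    · intro k; rw [hfib S hxS, hS.2, hj]
  · intro S hS S' hS' h
    simp only [SS, mem_filter, mem_powerset] at hS hS'
    have hxS : x ∉ S := fun h => by simpa using hS.1 h
    have hxS' : x ∉ S' := fun h => by simpa using hS'.1 h
    rw [← Finset.erase_insert hxS, ← Finset.erase_insert hxS', h]
  · intro S hS
    simp only [SS, mem_filter, mem_powerset] at hS
    refine ⟨S.erase x, ?_, Finset.insert_erase hS.2⟩
    simp only [SS, mem_filter, mem_powerset]
    refine ⟨Finset.erase_subset_erase _ hS.1.1, fun k => ?_⟩
    have := hfib (S.erase x) (by simp) k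
    rw [Finset.insert_erase hS.2, hS.1.2, hj] at this
    omega
  · intros; rfl

lemma deg_pos {C : Finset α} {T : Perm α} {m : ℕ} {w : List (Perm α)} (hw : w ∈ Fac C T m)
    (hm : 1 ≤ m) {z : α} (hz : z ∈ C) : deg z w ≠ 0 := by
  intro h
  rw [deg_eq_zero] at h
  obtain ⟨hl, hf⟩ := mem_Fac.1 hw
  obtain ⟨s, w', rfl⟩ := List.exists_cons_of_length_pos (l := w) (by omega)
  obtain ⟨a, b, hab, hs⟩ := hf.swaps s (by simp)
  have hall := hf.conn {z} (by intro t ht u hu; rw [Set.mem_singleton_iff] at hu ⊢; rw [hu, h t ht])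
    z hz rfl
  have key : ∀ c, s c ≠ c → c = z := by
    intro c hc
    by_contra h'
    apply hc
    apply hf.supp s (by simp)
    intro hcC
    exact h' (hall c hcC)
  have h1 := key a (by rw [hs, swap_apply_left]; exact hab.symm)
  have h2 := key b (by rw [hs, swap_apply_right]; exact hab)
  exact hab (h1.trans h2.symm)

lemma IsL_ins {C : Finset α} {T : Perm α} {x : α} {m p : ℕ} {w : List (Perm α)}
    (hx : x ∈ C) (hTC : T x ∈ C) (hTx : T x ≠ x) (hm : #C ≤ m + 1)
    (hw : w ∈ Fac (C.erase x) (swap x (T x) * T) m) {S : Finset α} (hS : S ⊆ C.erase x) :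
    IsL (ins x (T x) p w) S ↔ IsL w S ∧ (w.take p).prod⁻¹ (T x) ∉ S := by
  have hm1 : 1 ≤ m := by
    have : 1 < #C := Finset.one_lt_card.2 ⟨T x, hTC, x, hx, hTx⟩
    omega
  have hne : ∀ v ∈ S, v ≠ x := fun v hv => (Finset.mem_erase.1 (hS hv)).1
  constructor
  · intro h
    have hy : (w.take p).prod⁻¹ (T x) ∉ S := by
      intro hy
      have h1 := h _ hy
      rw [deg_ins (hne _ hy), if_pos rfl] at h1
      exact deg_pos hw hm1 (hS hy) (by omega)
    refine ⟨fun v hv => ?_, hy⟩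
    have h1 := h v hv
    rw [deg_ins (hne _ hv), if_neg (fun e => hy (by rwa [e] at hv))] at h1
    omega
  · rintro ⟨h, hy⟩ v hv
    rw [deg_ins (hne _ hv), if_neg (fun e => hy (by rwa [e] at hv)), h v hv]

lemma Dat.erase {n : ℕ} {C : Finset α} {T : Perm α} {lab : α → Fin n} (hD : Dat C T lab)
    {x : α} (hTx : T x ≠ x) : Dat (C.erase x) (swap x (T x) * T) lab := by
  have key : ∀ a, a ≠ x → T a ≠ x → (swap x (T x) * T) a = T a := by
    intro a h1 h2
    rw [Perm.mul_apply, swap_apply_of_ne_of_ne h2 (fun h => h1 (T.injective h))]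
  have keyx : (swap x (T x) * T) x = x := by simp
  have key' : ∀ a, T a = x → (swap x (T x) * T) a = T x := by
    intro a h; simp [h]
  refine ⟨?_, ?_, ?_⟩
  · intro a ha
    by_cases hax : a = x
    · rw [hax, keyx]
    · have haC : a ∉ C := by simpa [hax] using ha
      rw [key a hax (by rw [hD.fix a haC]; exact hax), hD.fix a haC]
  · intro a
    by_cases hax : a = x
    · rw [hax, keyx]
    · by_cases hTa : T a = x
      · rw [key' a hTa, hD.lab_eq, ← hTa, hD.lab_eq]
      · rw [key a hax hTa, hD.lab_eq]
  · intro U hU a ha haU b hb hab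
    have := hD.cyc ({u | u ∈ U ∧ u ≠ x} ∪ {u | u = x ∧ T⁻¹ x ∈ U}) ?_ a
      (Finset.mem_of_mem_erase ha) (Or.inl ⟨haU, (Finset.mem_erase.1 ha).1⟩) b
      (Finset.mem_of_mem_erase hb) hab
    · rcases this with h | h
      · exact h.1
      · exact absurd h.1 (Finset.mem_erase.1 hb).1
    · rintro u (⟨h1, h2⟩ | ⟨rfl, h2⟩)
      · by_cases hTu : T u = x
        · right
          refine ⟨hTu, ?_⟩
          rw [← hTu, inv_app]; exact h1
        · left
          refine ⟨?_, hTu⟩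
          rw [← key u h2 hTu]; exact hU u h1
      · left
        refine ⟨?_, hTx⟩
        have := hU _ h2
        rwa [key' _ (app_inv _ _)] at this

lemma fib_erase {n : ℕ} {C : Finset α} {lab : α → Fin n} {x : α} (hx : x ∈ C) (k : Fin n) :
    fib C lab k = fib (C.erase x) lab k + if lab x = k then 1 else 0 := by
  conv_lhs => rw [← Finset.insert_erase hx]
  simp only [fib, Finset.filter_insert]
  split_ifs with h
  · rw [Finset.card_insert_of_notMem (by simp)]
  · rfl

lemma leaf_rec {n : ℕ} {C : Finset α} {T : Perm α} {lab : α → Fin n} (hD : Dat C T lab)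
    {x : α} (hx : x ∈ C) (hTx : T x ≠ x) {m : ℕ} (hm : #C ≤ m + 1) {j j' : Fin n → ℕ}
    (hj : ∀ k, j k = j' k + if lab x = k then 1 else 0) :
    (fib (C.erase x) lab (lab x) : ℚ) *
      ∑ w ∈ Fac C T (m + 1), ∑ S ∈ SS C lab j, (if x ∈ S then if IsL w S then (1 : ℚ) else 0 else 0)
    = (m + 1) * (fib (C.erase x) lab (lab x) - j' (lab x)) *
      Y (C.erase x) (swap x (T x) * T) lab m j' := by
  have hTC : T x ∈ C := hD.mem.2 hx
  have h1 : ∑ w ∈ Fac C T (m + 1), ∑ S ∈ SS C lab j,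
      (if x ∈ S then if IsL w S then (1 : ℚ) else 0 else 0) =
      ∑ w ∈ Fac (C.erase x) (swap x (T x) * T) m, ∑ S ∈ SS (C.erase x) lab j',
        ((m + 1) * (if IsL w S then 1 else 0) -
        (if IsL w S then ∑ p ∈ range (m + 1),
          (if (w.take p).prod⁻¹ (T x) ∈ S then (1 : ℚ) else 0) else 0)) := by
    rw [Finset.sum_congr rfl (fun w _ => sum_SS_mem hx hj _)]
    have h2 : ∀ w ∈ Fac C T (m + 1),
        ∑ S ∈ SS (C.erase x) lab j', (if IsL w (insert x S) then (1 : ℚ) else 0) =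
        if deg x w = 1 then
          ∑ S ∈ SS (C.erase x) lab j', (if IsL w S then (1 : ℚ) else 0) else 0 := by
      intro w _
      have : ∀ S, IsL w (insert x S) ↔ deg x w = 1 ∧ IsL w S := by
        intro S; simp [IsL]
      split_ifs with h <;> simp [this, h]
    rw [Finset.sum_congr rfl h2, ← Finset.sum_filter, sum_leaf hx hD.fix hTx]
    refine Finset.sum_congr rfl (fun w hw => ?_)
    rw [Finset.sum_comm]
    refine Finset.sum_congr rfl (fun S hS => ?_)
    simp only [SS, mem_filter, mem_powerset] at hS
    simp only [IsL_ins hx hTC hTx hm hw hS.1]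
    by_cases hL : IsL w S
    · simp only [hL, true_and, if_true]
      rw [eq_sub_iff_add_eq, ← Finset.sum_add_distrib,
        Finset.sum_congr rfl (g := fun _ => (1 : ℚ))]
      · simp
      · intro p _
        split_ifs <;> simp_all
    · simp [hL]
  rw [h1]
  simp only [Finset.sum_sub_distrib]
  have hD' := hD.erase hTx
  have hb := bad_sum hD' m (m + 1) j' (T x)
  have ha := average hD' m j' (z := T x) (by simp [hTx, hTC])
  rw [hD.lab_eq] at ha
  rw [hb]
  simp only [← Finset.mul_sum]
  change _ * ((m + 1) * Y (C.erase x) (swap x (T x) * T) lab m j' - _) = _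
  push_cast
  linear_combination (-((m : ℚ) + 1)) * ha

noncomputable def B (a j : ℕ) : ℚ := (a : ℚ) * ((a : ℚ) - j) ^ j / (((a : ℚ) - j) * j.factorial)

lemma B_rec (a j : ℕ) :
    ((j : ℚ) + 1) * a * B (a + 1) (j + 1) = ((a : ℚ) + 1) * ((a : ℚ) - j) * B a j := by
  unfold B
  rw [Nat.factorial_succ]
  push_cast
  have e : ((a : ℚ) + 1 - (j + 1)) = (a : ℚ) - j := by ring
  rw [e]
  by_cases h : (a : ℚ) - j = 0
  · rw [h]; simp
  · have h1 : (j.factorial : ℚ) ≠ 0 := by positivity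
    have h2 : (j : ℚ) + 1 ≠ 0 := by positivity
    field_simp
    ring

lemma card_fib {n : ℕ} (C : Finset α) (lab : α → Fin n) : ∑ i, fib C lab i = #C := by
  unfold fib
  exact (Finset.card_eq_sum_card_fiberwise (fun _ _ => Finset.mem_univ _)).symm

lemma SS_zero {n : ℕ} (C : Finset α) (lab : α → Fin n) (j : Fin n → ℕ) (hj : ∀ i, j i = 0) :
    SS C lab j = {∅} := by
  ext S
  simp only [SS, mem_filter, mem_powerset, mem_singleton]
  constructor
  · rintro ⟨_, h⟩
    have := card_fib S lab
    rw [Finset.sum_eq_zero (fun i _ => by rw [h, hj])] at this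
    exact Finset.card_eq_zero.1 this.symm
  · rintro rfl
    simp [fib, hj]

lemma main_Y {n : ℕ} (lab : α → Fin n) (e : ℕ) (η : (Fin n → ℕ) → ℚ)
    (hη : ∀ (C : Finset α) (T : Perm α), Dat C T lab → (∀ i, 1 ≤ fib C lab i) →
      ((Fac C T (#C + e)).card : ℚ) / (#C + e).factorial = η (fib C lab)) :
    ∀ (N : ℕ) (C : Finset α) (T : Perm α) (j : Fin n → ℕ), ∑ i, j i = N → Dat C T lab →
      (∀ i, 1 ≤ fib C lab i) → (∀ i, j i ≤ fib C lab i) →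
      Y C T lab (#C + e) j / (#C + e).factorial =
        (∏ i, B (fib C lab i) (j i)) * η (fun i => fib C lab i - j i) := by
  intro N
  induction N with
  | zero =>
    intro C T j hN hD hf hj
    have hj0 : ∀ i, j i = 0 := by
      intro i
      simpa using (Finset.sum_eq_zero_iff.1 hN) i (Finset.mem_univ i)
    rw [Y, SS_zero C lab j hj0]
    have : ∀ w : List (Perm α), IsL w ∅ := fun w z hz => by simp at hz
    simp only [Finset.sum_singleton, this, if_true, Finset.sum_const, nsmul_eq_mul, mul_one]
    rw [hη C T hD hf]
    have h1 : ∀ i, B (fib C lab i) (j i) = 1 := by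
      intro i
      have : (fib C lab i : ℚ) ≠ 0 := by
        have := hf i
        positivity
      rw [hj0]; simp [B, this]
    rw [Finset.prod_congr rfl (fun i _ => h1 i)]
    simp [hj0]
  | succ N ih =>
    intro C T j hN hD hf hj
    obtain ⟨i, hi⟩ : ∃ i, j i ≠ 0 := by
      by_contra h
      push Not at h
      rw [Finset.sum_eq_zero (fun i _ => h i)] at hN
      omega
    have hCpos : 1 ≤ #C := by
      rw [← card_fib C lab]
      exact (hf i).trans (Finset.single_le_sum (f := fib C lab) (fun _ _ => Nat.zero_le _)
        (Finset.mem_univ i))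
    obtain ⟨c, hc⟩ : ∃ c, #C = c + 1 := ⟨#C - 1, by omega⟩
    have hm : #C + e = (c + e) + 1 := by omega
    obtain ⟨k, hk⟩ : ∃ k, j i = k + 1 := ⟨j i - 1, by omega⟩
    obtain ⟨a, ha⟩ : ∃ a, fib C lab i = a + 1 := ⟨fib C lab i - 1, by have := hf i; omega⟩
    have hka : k ≤ a := by have := hj i; omega
    by_cases ha0 : a = 0
    · subst ha0
      have hk0 : k = 0 := by omega
      have h1 : ∏ i, B (fib C lab i) (j i) = 0 := by
        apply Finset.prod_eq_zero (Finset.mem_univ i)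
        rw [ha, hk, hk0]; simp [B]
      rw [h1, zero_mul, Y]
      rw [Finset.sum_eq_zero, zero_div]
      intro w hw
      apply Finset.sum_eq_zero
      intro S hS
      rw [if_neg]
      intro hL
      simp only [SS, mem_filter, mem_powerset] at hS
      have h2 : 0 < fib S lab i := by rw [hS.2]; omega
      obtain ⟨x, hx⟩ := Finset.card_pos.1 h2
      rw [mem_filter] at hx
      rw [hm] at hw
      have hTx := (ins_surj (hS.1 hx.1) hw (hL x hx.1)).1
      obtain ⟨y, hy⟩ := Finset.card_eq_one.1 (show #(C.filter (fun a => lab a = i)) = 1 from ha)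
      have e1 : x ∈ C.filter (fun a => lab a = i) := by simp [hS.1 hx.1, hx.2]
      have e2 : T x ∈ C.filter (fun a => lab a = i) := by
        simp [hD.mem, hD.lab_eq, hS.1 hx.1, hx.2]
      rw [hy, mem_singleton] at e1 e2
      exact hTx (e2.trans e1.symm)
    · have hT : ∀ x ∈ C, lab x = i → T x ≠ x := by
        intro x hx hxi hTx
        have := hD.cyc {x} (by intro u hu; rw [Set.mem_singleton_iff] at hu ⊢; rw [hu, hTx]) x hx rfl
        have h2 : C.filter (fun a => lab a = i) ⊆ {x} := by
          intro b hb
          rw [mem_filter] at hb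
          simpa using this b hb.1 (hb.2.trans hxi.symm)
        have := Finset.card_le_card h2
        have h3 : #(C.filter (fun a => lab a = i)) = a + 1 := ha
        simp at this
        omega
      set j' : Fin n → ℕ := Function.update j i k with hj'
      have hj'i : j' i = k := by simp [hj']
      have hj'k : ∀ l, l ≠ i → j' l = j l := fun l hl => by simp [hj', hl]
      have hjj : ∀ l, j l = j' l + if i = l then 1 else 0 := by
        intro l
        by_cases h : l = i
        · subst h; simp [hj'i, hk]
        · simp [hj'k l h, Ne.symm h]
      have hN' : ∑ l, j' l = N := by
        have : ∑ l, j l = ∑ l, j' l + 1 := by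
          rw [Finset.sum_congr rfl (fun l _ => hjj l), Finset.sum_add_distrib]
          simp
        omega
      set R : ℚ := (∏ l ∈ univ.erase i, B (fib C lab l) (j l)) * η (fun l => fib C lab l - j l)
        with hR
      have hrec : ∀ x ∈ C.filter (fun a => lab a = i),
          (a : ℚ) * ∑ w ∈ Fac C T (#C + e), ∑ S ∈ SS C lab j,
            (if x ∈ S then if IsL w S then (1 : ℚ) else 0 else 0) =
          (#C + e).factorial * ((a : ℚ) - k) * (B a k * R) := by
        intro x hx
        rw [mem_filter] at hx
        obtain ⟨hxC, hxi⟩ := hx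
        have hTx := hT x hxC hxi
        have hfe := fun l => fib_erase (lab := lab) hxC l
        rw [hxi] at hfe
        have hfi : fib (C.erase x) lab i = a := by
          have := hfe i; simp at this; omega
        have hfl : ∀ l, l ≠ i → fib (C.erase x) lab l = fib C lab l := by
          intro l hl
          have := hfe l
          simpa [Ne.symm hl] using this.symm
        have hce : #(C.erase x) = c := by rw [Finset.card_erase_of_mem hxC]; omega
        have h1 := leaf_rec hD hxC hTx (m := c + e) (by omega) (j := j) (j' := j')
          (by rw [hxi]; exact hjj)
        rw [hxi, hfi, hj'i] at h1
        have h2 := ih (C.erase x) (swap x (T x) * T) j' hN' (hD.erase hTx) (by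
          intro l
          by_cases h : l = i
          · subst h; omega
          · rw [hfl l h]; exact hf l) (by
          intro l
          by_cases h : l = i
          · subst h; omega
          · rw [hfl l h, hj'k l h]; exact hj l)
        rw [hce, ← Finset.mul_prod_erase univ _ (Finset.mem_univ i), hfi, hj'i] at h2
        have h3 : ∏ l ∈ univ.erase i, B (fib (C.erase x) lab l) (j' l) =
            ∏ l ∈ univ.erase i, B (fib C lab l) (j l) := by
          refine Finset.prod_congr rfl (fun l hl => ?_)
          have hl' := (Finset.mem_erase.1 hl).1
          rw [hfl l hl', hj'k l hl']
        have h4 : (fun l => fib (C.erase x) lab l - j' l) = fun l => fib C lab l - j l := by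
          funext l
          by_cases h : l = i
          · subst h; omega
          · rw [hfl l h, hj'k l h]
        rw [h3, h4, mul_assoc, ← hR, div_eq_iff (by positivity)] at h2
        rw [hm, h1, h2, Nat.factorial_succ]
        push_cast
        ring
      have hjY : (j i : ℚ) * Y C T lab (#C + e) j = ∑ x ∈ C.filter (fun a => lab a = i),
          ∑ w ∈ Fac C T (#C + e), ∑ S ∈ SS C lab j,
            (if x ∈ S then if IsL w S then (1 : ℚ) else 0 else 0) := by
        rw [Finset.sum_comm, Y, Finset.mul_sum]
        refine Finset.sum_congr rfl (fun w _ => ?_)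
        rw [Finset.sum_comm, Finset.mul_sum]
        refine Finset.sum_congr rfl (fun S hS => ?_)
        simp only [SS, mem_filter, mem_powerset] at hS
        rw [← hS.2, fib, Finset.sum_ite_mem, Finset.sum_const, nsmul_eq_mul]
        congr 3
        ext b
        simp only [mem_inter, mem_filter]
        constructor
        · rintro ⟨h, h'⟩; exact ⟨⟨hS.1 h, h'⟩, h⟩
        · rintro ⟨⟨_, h⟩, h'⟩; exact ⟨h', h⟩
      have hsum : (a : ℚ) * ((j i : ℚ) * Y C T lab (#C + e) j) =
          (a + 1) * ((#C + e).factorial * ((a : ℚ) - k) * (B a k * R)) := by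
        rw [hjY, Finset.mul_sum, Finset.sum_congr rfl hrec, Finset.sum_const, nsmul_eq_mul]
        have : #(C.filter (fun a => lab a = i)) = a + 1 := ha
        rw [this]; push_cast; ring
      rw [← Finset.mul_prod_erase univ _ (Finset.mem_univ i), mul_assoc,
        ← hR, div_eq_iff (by positivity), ha, hk]
      have hB := B_rec a k
      have ha' : (a : ℚ) ≠ 0 := by exact_mod_cast ha0
      have hk' : (k : ℚ) + 1 ≠ 0 := by positivity
      rw [hk] at hsum
      push_cast at hsum
      have hne : (a : ℚ) * (k + 1) ≠ 0 := mul_ne_zero ha' hk'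
      apply mul_left_cancel₀ hne
      linear_combination hsum - ((#C + e).factorial : ℚ) * R * hB

lemma incl_excl {n : ℕ} (C : Finset α) (T : Perm α) (lab : α → Fin n) (m : ℕ) (hm : 1 ≤ m) :
    (((Fac C T m).filter (fun w => ∀ x ∈ C, 2 ≤ deg x w)).card : ℚ) =
      ∑ j ∈ Fintype.piFinset (fun i => range (fib C lab i + 1)),
        (-1) ^ (∑ i, j i) * Y C T lab m j := by
  have h1 : ∀ j, (-1 : ℚ) ^ (∑ i, j i) * Y C T lab m j =
      ∑ w ∈ Fac C T m, ∑ S ∈ C.powerset.filter (fun S => fib S lab = j),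
        (-1) ^ (#S) * if IsL w S then (1 : ℚ) else 0 := by
    intro j
    rw [Y, Finset.mul_sum]
    refine Finset.sum_congr rfl (fun w _ => ?_)
    rw [Finset.mul_sum]
    have : SS C lab j = C.powerset.filter (fun S => fib S lab = j) := by
      ext S; simp [SS, funext_iff]
    rw [this]
    refine Finset.sum_congr rfl (fun S hS => ?_)
    rw [mem_filter] at hS
    rw [← card_fib S lab, hS.2]
  rw [Finset.sum_congr rfl (fun j _ => h1 j), Finset.sum_comm, Finset.card_filter]
  push_cast
  refine Finset.sum_congr rfl (fun w hw => ?_)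
  rw [Finset.sum_fiberwise_of_maps_to]
  · have h2 : ∑ S ∈ C.powerset, (-1 : ℚ) ^ (#S) * (if IsL w S then (1 : ℚ) else 0) =
        ∑ S ∈ (C.filter (fun x => deg x w = 1)).powerset, (-1 : ℚ) ^ (#S) := by
      simp only [mul_ite, mul_one, mul_zero]
      rw [← Finset.sum_filter]
      apply Finset.sum_congr _ (fun _ _ => rfl)
      ext S
      rw [mem_filter, mem_powerset, mem_powerset]
      constructor
      · rintro ⟨h, h'⟩ x hx; exact mem_filter.2 ⟨h hx, h' x hx⟩
      · intro h
        exact ⟨fun x hx => (mem_filter.1 (h hx)).1, fun x hx => (mem_filter.1 (h hx)).2⟩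
    rw [h2]
    have h3 := Finset.sum_powerset_neg_one_pow_card (x := C.filter (fun x => deg x w = 1))
    have h4 : ∑ S ∈ (C.filter (fun x => deg x w = 1)).powerset, (-1 : ℚ) ^ (#S) =
        ((∑ S ∈ (C.filter (fun x => deg x w = 1)).powerset, (-1 : ℤ) ^ (#S) : ℤ) : ℚ) := by
      push_cast; rfl
    rw [h4, h3]
    have h5 : (∀ x ∈ C, 2 ≤ deg x w) ↔ C.filter (fun x => deg x w = 1) = ∅ := by
      rw [Finset.filter_eq_empty_iff]
      constructor
      · intro h x hx; have := h x hx; omega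
      · intro h x hx
        have := h hx
        have := deg_pos hw hm hx
        omega
    by_cases h : C.filter (fun x => deg x w = 1) = ∅
    · rw [if_pos (h5.2 h), if_pos h]; simp
    · rw [if_neg (fun h' => h (h5.1 h')), if_neg h]; simp
  · intro S hS
    rw [mem_powerset] at hS
    simp only [Fintype.mem_piFinset, Finset.mem_range]
    intro i
    exact Nat.lt_succ_of_le (Finset.card_le_card (Finset.filter_subset_filter _ hS))
end

noncomputable def cc (a l : ℕ) : ℚ := if l ≤ a then (-1) ^ (a - l) * B a (a - l) else 0

lemma one_var (a l : ℕ) (ha : 1 ≤ a) (hl : l ≤ a) :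
    ∑ v ∈ Icc 1 a, (a : ℚ) ^ (a - v) / (a - v).factorial * cc v l = if l = a then 1 else 0 := by
  rcases Nat.eq_zero_or_pos l with rfl | hl0
  · rw [if_neg (by omega)]
    apply Finset.sum_eq_zero
    intro v hv
    simp [cc, B]
  obtain ⟨N, rfl⟩ : ∃ N, a = l + N := ⟨a - l, by omega⟩
  have h1 : ∑ v ∈ Icc 1 (l + N), ((l + N : ℕ) : ℚ) ^ (l + N - v) / (l + N - v).factorial * cc v l =
      ∑ j ∈ range (N + 1), ((l + N : ℕ) : ℚ) ^ (N - j) / (N - j).factorial *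
        ((-1) ^ j * B (l + j) j) := by
    symm
    refine Finset.sum_of_injOn (fun j => l + j) ?_ ?_ ?_ ?_
    · intro x _ y _ h; simpa using h
    · intro x hx
      simp at hx ⊢; omega
    · intro v hv hv'
      have : ¬ l ≤ v := by
        intro h
        apply hv'
        simp at hv ⊢
        exact ⟨v - l, by omega, by omega⟩
      simp [cc, this]
    · intro j hj
      have e1 : l + N - (l + j) = N - j := by omega
      have e2 : l + j - l = j := by omega
      simp only [cc, e1, e2, if_pos (Nat.le_add_right l j)]
  rw [h1]
  have hlq : (l : ℚ) ≠ 0 := by positivity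
  have hB : ∀ j, B (l + j) j = ((l : ℚ) + j) * (l : ℚ) ^ j / (l * j.factorial) := by
    intro j; unfold B; push_cast; rw [add_sub_cancel_right]
  rcases Nat.eq_zero_or_pos N with rfl | hN
  · simp [hB, hlq]
  rw [if_neg (by omega)]
  obtain ⟨M, rfl⟩ : ∃ M, N = M + 1 := ⟨N - 1, by omega⟩
  set q : ℚ := ((l + (M + 1) : ℕ) : ℚ) with hq
  have hq' : q - l = (M : ℚ) + 1 := by rw [hq]; push_cast; ring
  have hfac : ((M + 1).factorial : ℚ) ≠ 0 := by positivity
  apply mul_left_cancel₀ hfac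
  rw [Finset.mul_sum, mul_zero]
  have h2 : ∀ j ∈ range (M + 1 + 1),
      ((M + 1).factorial : ℚ) * (q ^ (M + 1 - j) / (M + 1 - j).factorial *
        ((-1) ^ j * B (l + j) j)) =
      (-(l : ℚ)) ^ j * q ^ (M + 1 - j) * ((M + 1).choose j : ℚ) +
      (l : ℚ)⁻¹ * (j * ((-(l : ℚ)) ^ j * q ^ (M + 1 - j) * ((M + 1).choose j : ℚ))) := by
    intro j hj
    rw [Finset.mem_range] at hj
    rw [hB, Nat.cast_choose ℚ (show j ≤ M + 1 by omega), neg_pow (l : ℚ)]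
    have f1 : (j.factorial : ℚ) ≠ 0 := by positivity
    have f2 : ((M + 1 - j).factorial : ℚ) ≠ 0 := by positivity
    field_simp
  rw [Finset.sum_congr rfl h2, Finset.sum_add_distrib, ← Finset.mul_sum, ← add_pow,
    Finset.sum_range_succ' (fun j : ℕ => (j : ℚ) * ((-(l : ℚ)) ^ j * q ^ (M + 1 - j) *
      ((M + 1).choose j : ℚ)))]
  have h3 : ∀ j ∈ range (M + 1), (((j + 1 : ℕ) : ℚ) * ((-(l : ℚ)) ^ (j + 1) * q ^ (M + 1 - (j + 1)) *
      ((M + 1).choose (j + 1) : ℚ))) =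
      (-(l : ℚ) * (M + 1)) * ((-(l : ℚ)) ^ j * q ^ (M - j) * (M.choose j : ℚ)) := by
    intro j _
    have e1 : M + 1 - (j + 1) = M - j := by omega
    rw [e1]
    have e2 : ((M : ℚ) + 1) * M.choose j = (M + 1).choose (j + 1) * ((j : ℚ) + 1) := by
      exact_mod_cast Nat.add_one_mul_choose_eq M j
    push_cast
    rw [pow_succ]
    linear_combination (-(-(l : ℚ)) ^ j * (-(l : ℚ)) * q ^ (M - j)) * e2
  rw [Finset.sum_congr rfl h3, ← Finset.mul_sum, ← add_pow]
  have e3 : -(l : ℚ) + q = M + 1 := by linarith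
  rw [e3]
  simp only [Nat.cast_zero, zero_mul, add_zero]
  field_simp
  ring

lemma inversion {n : ℕ} (μ : Fin n → ℕ) (hμ : ∀ i, 1 ≤ μ i) (η κ : (Fin n → ℕ) → ℚ)
    (hκ : ∀ ν : Fin n → ℕ, (∀ i, 1 ≤ ν i) → κ ν =
      ∑ j ∈ Fintype.piFinset (fun i => range (ν i + 1)),
        (-1) ^ (∑ i, j i) * ((∏ i, B (ν i) (j i)) * η (fun i => ν i - j i))) :
    η μ = ∑ ν ∈ Fintype.piFinset (fun i => Icc 1 (μ i)),
      κ ν * ∏ i, (μ i : ℚ) ^ (μ i - ν i) / (μ i - ν i).factorial := by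
  have h1 : ∀ ν ∈ Fintype.piFinset (fun i => Icc 1 (μ i)), κ ν =
      ∑ l ∈ Fintype.piFinset (fun i => range (μ i + 1)), (∏ i, cc (ν i) (l i)) * η l := by
    intro ν hν
    simp only [Fintype.mem_piFinset, Finset.mem_Icc] at hν
    rw [hκ ν (fun i => (hν i).1)]
    refine Finset.sum_of_injOn (fun j i => ν i - j i) ?_ ?_ ?_ ?_
    · intro x hx y hy h
      simp only [Finset.mem_coe, Fintype.mem_piFinset, Finset.mem_range] at hx hy
      funext i
      have := congrFun h i
      have := hx i
      have := hy i
      simp only at *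
      omega
    · intro x hx
      simp only [Finset.mem_coe, Fintype.mem_piFinset, Finset.mem_range] at hx ⊢
      intro i
      have := (hν i).2
      omega
    · intro l hl hl'
      have : ∃ i, ¬ l i ≤ ν i := by
        by_contra h
        push Not at h
        apply hl'
        refine ⟨fun i => ν i - l i, ?_, ?_⟩
        · simp only [Finset.mem_coe, Fintype.mem_piFinset, Finset.mem_range]
          intro i; omega
        · funext i; have := h i; simp only; omega
      obtain ⟨i, hi⟩ := this
      rw [Finset.prod_eq_zero (Finset.mem_univ i), zero_mul]
      simp [cc, hi]
    · intro j hj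
      simp only [Fintype.mem_piFinset, Finset.mem_range] at hj
      rw [← mul_assoc, ← Finset.prod_pow_eq_pow_sum, ← Finset.prod_mul_distrib]
      congr 1
      refine Finset.prod_congr rfl (fun i _ => ?_)
      have e : ν i - (ν i - j i) = j i := by have := hj i; omega
      rw [cc, if_pos (Nat.sub_le _ _), e]
  rw [Finset.sum_congr rfl (fun ν hν => by rw [h1 ν hν, Finset.sum_mul]), Finset.sum_comm]
  have h2 : ∀ l ∈ Fintype.piFinset (fun i => range (μ i + 1)),
      ∑ ν ∈ Fintype.piFinset (fun i => Icc 1 (μ i)), (∏ i, cc (ν i) (l i)) * η l *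
        ∏ i, (μ i : ℚ) ^ (μ i - ν i) / (μ i - ν i).factorial = if l = μ then η l else 0 := by
    intro l hl
    simp only [Fintype.mem_piFinset, Finset.mem_range] at hl
    have h3 : ∀ ν ∈ Fintype.piFinset (fun i => Icc 1 (μ i)), (∏ i, cc (ν i) (l i)) * η l *
        ∏ i, (μ i : ℚ) ^ (μ i - ν i) / (μ i - ν i).factorial =
        η l * ∏ i, ((μ i : ℚ) ^ (μ i - ν i) / (μ i - ν i).factorial * cc (ν i) (l i)) := by
      intro ν _
      rw [Finset.prod_mul_distrib]; ring
    rw [Finset.sum_congr rfl h3, ← Finset.mul_sum,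
      ← Finset.prod_univ_sum (fun i => Icc 1 (μ i))
        (fun i v => (μ i : ℚ) ^ (μ i - v) / (μ i - v).factorial * cc v (l i)),
      Finset.prod_congr rfl (fun i _ => one_var (μ i) (l i) (hμ i) (by have := hl i; omega))]
    split_ifs with h
    · subst h; simp
    · obtain ⟨i, hi⟩ := Function.ne_iff.1 h
      rw [Finset.prod_eq_zero (Finset.mem_univ i), mul_zero]
      rw [if_neg hi]
  rw [Finset.sum_congr rfl h2, Finset.sum_ite_eq', if_pos]
  simp [Fintype.mem_piFinset]

section
variable {α : Type} [DecidableEq α] [Fintype α]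

lemma Dat.sameCycle {n : ℕ} {C : Finset α} {T : Perm α} {lab : α → Fin n} (h : Dat C T lab)
    {a : α} (ha : a ∈ C) (b : α) : T.SameCycle a b ↔ b ∈ C ∧ lab b = lab a := by
  constructor
  · rintro ⟨k, rfl⟩
    have hz : ∀ k : ℕ, ∀ a, ((T ^ k) a ∈ C ↔ a ∈ C) ∧ lab ((T ^ k) a) = lab a := by
      intro k
      induction k with
      | zero => simp
      | succ k ih =>
        intro a
        rw [pow_succ']
        simp only [Perm.mul_apply, h.mem, h.lab_eq]
        exact ih a
    rcases Int.eq_nat_or_neg k with ⟨m, rfl | rfl⟩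
    · simp only [zpow_natCast]
      exact ⟨(hz m a).1.2 ha, (hz m a).2⟩
    · have h1 := hz m ((T ^ (-(m : ℤ))) a)
      have h2 : (T ^ m) ((T ^ (-(m : ℤ))) a) = a := by
        rw [← Perm.mul_apply, ← zpow_natCast, ← zpow_add]; simp
      rw [h2] at h1
      exact ⟨h1.1.1 ha, h1.2.symm⟩
  · rintro ⟨hb, hl⟩
    refine h.cyc {b | T.SameCycle a b} ?_ a ha (Perm.SameCycle.refl T a) b hb hl
    intro u hu
    exact Perm.sameCycle_apply_right.2 hu

lemma Dat.cycleType_eq {n : ℕ} {C : Finset α} {T : Perm α} {lab : α → Fin n} (h : Dat C T lab)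
    (hf : ∀ i, 1 ≤ fib C lab i) :
    T.cycleType = (Multiset.map (fib C lab) univ.val).filter (fun x => 2 ≤ x) := by
  have hr : ∀ i, ∃ a, a ∈ C ∧ lab a = i := by
    intro i
    obtain ⟨a, ha⟩ := Finset.card_pos.1 (hf i)
    exact ⟨a, by simpa using ha⟩
  choose r hrC hrl using hr
  have hmv : ∀ i, T (r i) ≠ r i ↔ 2 ≤ fib C lab i := by
    intro i
    constructor
    · intro hne
      refine Finset.one_lt_card.2 ⟨T (r i), ?_, r i, ?_, hne⟩
      · simp [h.mem, hrC, h.lab_eq, hrl]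
      · simp [hrC, hrl]
    · intro h2 he
      obtain ⟨a, ha, b, hb, hab⟩ := Finset.one_lt_card.1 h2
      simp only [Finset.mem_filter] at ha hb
      have hc := h.cyc {r i} (by rintro u rfl; exact he) (r i) (hrC i) rfl
      have h3 := hc a ha.1 (by rw [ha.2, hrl])
      have h4 := hc b hb.1 (by rw [hb.2, hrl])
      exact hab (h3.trans h4.symm)
  have hs : ∀ i, 2 ≤ fib C lab i → (T.cycleOf (r i)).support = C.filter (fun a => lab a = i) := by
    intro i hi
    ext b
    rw [Perm.mem_support_cycleOf_iff' ((hmv i).2 hi), h.sameCycle (hrC i)]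
    simp [hrl]
  have hinj : Set.InjOn (fun i => T.cycleOf (r i)) ((univ.filter (fun i => 2 ≤ fib C lab i) : Finset (Fin n)) : Set (Fin n)) := by
    intro i hi j hj hij
    simp only [Finset.coe_filter, Finset.mem_univ, true_and, Set.mem_ofPred_eq] at hi hj
    have h1 := hs i hi
    have h2 := hs j hj
    simp only at hij
    rw [hij, h2] at h1
    have : r i ∈ C.filter (fun a => lab a = j) := by rw [h1]; simp [hrC, hrl]
    simp only [Finset.mem_filter, hrl] at this
    exact this.2
  have hcf : T.cycleFactorsFinset =
      (univ.filter (fun i => 2 ≤ fib C lab i)).image (fun i => T.cycleOf (r i)) := by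
    ext c
    simp only [Finset.mem_image, Finset.mem_filter, Finset.mem_univ, true_and]
    constructor
    · intro hc
      have hcy := (Perm.mem_cycleFactorsFinset_iff.1 hc)
      obtain ⟨a, ha⟩ := hcy.1.nonempty_support
      have hca := Perm.cycle_is_cycleOf ha hc
      have hTa : T a ≠ a := by
        rw [← hcy.2 a ha]; exact Perm.mem_support.1 ha
      have haC : a ∈ C := by
        by_contra hn; exact hTa (h.fix a hn)
      have hsc : T.SameCycle a (r (lab a)) := (h.sameCycle haC _).2 ⟨hrC _, hrl _⟩
      refine ⟨lab a, ?_, ?_⟩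
      · rw [← hmv]
        intro he
        exact hTa ((hsc.apply_eq_self_iff).2 he)
      · rw [hca, hsc.cycleOf_eq]
    · rintro ⟨i, hi, rfl⟩
      rw [Perm.cycleOf_mem_cycleFactorsFinset_iff, Perm.mem_support]
      exact (hmv i).2 hi
  rw [Perm.cycleType_def, hcf, Finset.image_val_of_injOn hinj, Multiset.map_map, Multiset.filter_map]
  refine Multiset.map_congr rfl ?_
  intro i hi
  have hi' : i ∈ univ.filter (fun i => 2 ≤ fib C lab i) := hi
  simp only [Finset.mem_filter, Finset.mem_univ, true_and] at hi'
  simp only [Function.comp, hs i hi']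
  rfl

end

section
variable {α : Type} [DecidableEq α] [Fintype α]

lemma card_transport {β γ : Type} (P : β → Prop) (S : Finset γ) (Φ : β → γ)
    (hΦ : Function.Injective Φ) (h1 : ∀ b, Φ b ∈ S ↔ P b) (h2 : ∀ c ∈ S, ∃ b, Φ b = c) :
    Nat.card {b // P b} = S.card := by
  have e : {b // P b} ≃ {c // c ∈ S} := Equiv.ofBijective (fun b => ⟨Φ b.1, (h1 _).2 b.2⟩) (by
    constructor
    · intro a b hab
      exact Subtype.ext (hΦ (congrArg Subtype.val hab))
    · rintro ⟨c, hc⟩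
      obtain ⟨b, rfl⟩ := h2 c hc
      exact ⟨⟨b, (h1 b).1 hc⟩, rfl⟩)
  rw [Nat.card_congr e]
  simp

lemma countP_ofFn {β : Type} {m : ℕ} (p : β → Bool) (g : Fin m → β) :
    (List.ofFn g).countP p = #(univ.filter (fun i => p (g i) = true)) := by
  induction m with
  | zero => simp
  | succ m ih =>
    rw [List.ofFn_succ, List.countP_cons, ih, Fin.card_filter_univ_succ']
    ring

lemma swap_extend {C : Finset α} {d : ℕ} (f : Fin d ≃ {a // a ∈ C}) (s : Perm (Fin d)) :
    (s.extendDomain f).IsSwap ↔ s.IsSwap := by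
  rw [Perm.isSwap_iff_cycleType, Perm.isSwap_iff_cycleType, Perm.cycleType_extendDomain]

lemma exists_extend {C : Finset α} {d : ℕ} (f : Fin d ≃ {a // a ∈ C}) (s : Perm α)
    (hs : ∀ a, a ∉ C → s a = a) : ∃ s0 : Perm (Fin d), s0.extendDomain f = s := by
  have hm : ∀ a, s a ∈ C ↔ a ∈ C := by
    intro a
    constructor
    · intro h
      by_contra hn
      rw [hs a hn] at h; exact hn h
    · intro h
      by_contra hn
      have := s.injective (hs _ hn)
      rw [this] at hn; exact hn h
  refine ⟨f.symm.permCongr (s.subtypePerm hm), ?_⟩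
  ext a
  by_cases ha : a ∈ C
  · have : a = f (f.symm ⟨a, ha⟩) := by simp
    rw [this, Perm.extendDomain_apply_image]
    simp
  · rw [Perm.extendDomain_apply_not_subtype _ _ ha, hs a ha]

lemma prod_extend {C : Finset α} {d m : ℕ} (f : Fin d ≃ {a // a ∈ C}) (σ : Fin m → Perm (Fin d)) :
    (List.ofFn (fun i => (σ i).extendDomain f)).prod = (List.ofFn σ).prod.extendDomain f := by
  have := map_list_prod (Perm.extendDomainHom f) (List.ofFn σ)
  rw [List.map_ofFn] at this
  exact this.symm

lemma fac_iff {C : Finset α} {d m : ℕ} (f : Fin d ≃ {a // a ∈ C}) (T0 : Perm (Fin d))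
    (σ : Fin m → Perm (Fin d)) :
    IsFac C (T0.extendDomain f) (List.ofFn (fun i => (σ i).extendDomain f)) ↔
      IsSimpleFactorisation T0 σ := by
  constructor
  · rintro ⟨h1, h2, h3, h4⟩
    refine ⟨?_, ?_, ?_⟩
    · intro i
      rw [← swap_extend f]
      exact h1 _ (by simp)
    · rw [prod_extend] at h3
      exact Perm.extendDomainHom_injective f h3
    · intro x y
      have := h4 {a | ∃ g ∈ Subgroup.closure (Set.range σ), a = f (g x)} ?_ (f x) (f x).2
        ⟨1, Subgroup.one_mem _, rfl⟩ (f y) (f y).2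
      · obtain ⟨g, hg, he⟩ := this
        exact ⟨g, hg, (f.injective (Subtype.ext he)).symm⟩
      · intro s hs u hu
        obtain ⟨i, rfl⟩ := (List.mem_ofFn' _ _).1 hs
        obtain ⟨g, hg, rfl⟩ := hu
        refine ⟨σ i * g, Subgroup.mul_mem _ (Subgroup.subset_closure ⟨i, rfl⟩) hg, ?_⟩
        simp only [Perm.extendDomain_apply_image, Perm.mul_apply]
  · rintro ⟨h1, h2, h3⟩
    refine ⟨?_, ?_, ?_, ?_⟩
    · intro s hs
      obtain ⟨i, rfl⟩ := (List.mem_ofFn' _ _).1 hs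
      exact (swap_extend f _).2 (h1 i)
    · intro s hs a ha
      obtain ⟨i, rfl⟩ := (List.mem_ofFn' _ _).1 hs
      exact Perm.extendDomain_apply_not_subtype _ _ ha
    · rw [prod_extend, h2]
    · intro U hU a ha haU b hb
      obtain ⟨g, hg, he⟩ := h3 (f.symm ⟨a, ha⟩) (f.symm ⟨b, hb⟩)
      have key : ∀ g ∈ Subgroup.closure (Set.range σ), ∀ u, ((f u : α) ∈ U ↔ (f (g u) : α) ∈ U) := by
        clear he hg
        intro g hg
        induction hg using Subgroup.closure_induction with
        | mem x hx =>
          obtain ⟨i, rfl⟩ := hx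
          have hstep : ∀ u, (f u : α) ∈ U → (f (σ i u) : α) ∈ U := by
            intro u hu
            have := hU ((σ i).extendDomain f) (by simp) _ hu
            rwa [Perm.extendDomain_apply_image] at this
          intro u
          refine ⟨hstep u, fun h => ?_⟩
          have h5 := hstep _ h
          have : σ i (σ i u) = u := by
            obtain ⟨p, q, _, e⟩ := h1 i
            rw [e]; simp
          rwa [this] at h5
        | one => simp
        | mul x y hx hy ihx ihy =>
          intro u
          rw [ihy u, ihx (y u)]; rfl
        | inv x hx ih =>
          intro u
          rw [ih (x⁻¹ u), app_inv]
      have h6 := (key g hg (f.symm ⟨a, ha⟩)).1 (by simpa using haU)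
      rw [he] at h6
      simpa using h6

lemma deg_ofFn {C : Finset α} {d m : ℕ} (f : Fin d ≃ {a // a ∈ C}) (x : Fin d)
    (σ : Fin m → Perm (Fin d)) :
    deg (f x : α) (List.ofFn (fun i => (σ i).extendDomain f)) = Nat.card {i : Fin m // σ i x ≠ x} := by
  have e : ∀ s : Perm (Fin d), s.extendDomain f (f x) ≠ (f x : α) ↔ s x ≠ x := by
    intro s
    rw [Perm.extendDomain_apply_image, Ne, Subtype.coe_inj, f.injective.eq_iff]
  unfold deg
  rw [Nat.card_eq_fintype_card, Fintype.card_subtype, countP_ofFn]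
  simp only [decide_eq_true_eq, e]

lemma card_simple {C : Finset α} {d m : ℕ} (f : Fin d ≃ {a // a ∈ C}) (T0 : Perm (Fin d)) :
    Nat.card {σ : Fin m → Perm (Fin d) // IsSimpleFactorisation T0 σ} =
      (Fac C (T0.extendDomain f) m).card ∧
    Nat.card {σ : Fin m → Perm (Fin d) // IsPrunedFactorisation T0 σ} =
      ((Fac C (T0.extendDomain f) m).filter (fun w => ∀ x ∈ C, 2 ≤ deg x w)).card := by
  have hinj : Function.Injective (fun (σ : Fin m → Perm (Fin d)) => List.ofFn (fun i => (σ i).extendDomain f)) := by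
    intro σ τ h
    have := List.ofFn_injective h
    funext i
    exact Perm.extendDomainHom_injective f (congrFun this i)
  have hsurj : ∀ w ∈ Fac C (T0.extendDomain f) m, ∃ σ : Fin m → Perm (Fin d),
      List.ofFn (fun i => (σ i).extendDomain f) = w := by
    intro w hw
    obtain ⟨hl, hw2⟩ := mem_Fac.1 hw
    subst hl
    choose σ hσ using fun i : Fin w.length => exists_extend f w[i] (hw2.supp _ (by simp))
    refine ⟨σ, ?_⟩
    simp only [hσ]
    simp
  constructor
  · refine card_transport _ _ _ hinj ?_ hsurj
    intro σ
    rw [mem_Fac, fac_iff]; simp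
  · refine card_transport _ _ _ hinj ?_ ?_
    · intro σ
      rw [Finset.mem_filter, mem_Fac, fac_iff, IsPrunedFactorisation]
      simp only [List.length_ofFn, true_and]
      refine and_congr_right fun _ => ?_
      constructor
      · intro h x
        rw [← deg_ofFn f]; exact h _ (f x).2
      · intro h x hx
        have := h (f.symm ⟨x, hx⟩)
        rw [← deg_ofFn f] at this
        simpa using this
    · intro w hw
      exact hsurj w (Finset.mem_filter.1 hw).1

end

section
variable {α : Type} [DecidableEq α] [Fintype α]

lemma hurwitz_eq (H K : ℕ → Multiset ℕ → ℚ)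
    (hH : IsNormalisedSimpleHurwitz H) (hK : IsNormalisedPrunedHurwitz K)
    {g n e : ℕ} (he : 2 * g + n = e + 2) {C : Finset α} {T : Perm α} {lab : α → Fin n}
    (h : Dat C T lab) (hf : ∀ i, 1 ≤ fib C lab i) :
    H g (Multiset.map (fib C lab) univ.val) = ((Fac C T (#C + e)).card : ℚ) / (#C + e).factorial ∧
    K g (Multiset.map (fib C lab) univ.val) =
      (((Fac C T (#C + e)).filter (fun w => ∀ x ∈ C, 2 ≤ deg x w)).card : ℚ) / (#C + e).factorial := by
  have hsum : (Multiset.map (fib C lab) univ.val).sum = #C := card_fib C lab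
  have hcard : Multiset.card (Multiset.map (fib C lab) univ.val) = n := by simp
  have hpos : ∀ x ∈ Multiset.map (fib C lab) univ.val, 1 ≤ x := by
    intro x hx
    obtain ⟨i, _, rfl⟩ := Multiset.mem_map.1 hx
    exact hf i
  have hct := h.cycleType_eq hf
  generalize hμ : Multiset.map (fib C lab) univ.val = μ at *
  let f : Fin μ.sum ≃ {a // a ∈ C} := (finCongr hsum).trans C.equivFin.symm
  obtain ⟨T0, rfl⟩ := exists_extend f T h.fix
  rw [Perm.cycleType_extendDomain] at hct
  have hm : 2 * g + Multiset.card μ + μ.sum - 2 = #C + e := by omega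
  have hc := card_simple (m := #C + e) f T0
  have h1 := hH g μ hpos T0 hct
  have h2 := hK g μ hpos T0 hct
  rw [hm] at h1 h2
  rw [hc.1] at h1
  rw [hc.2] at h2
  exact ⟨h1, h2⟩

end

lemma rot_closed {k : ℕ} (U : Set (Fin k)) (hU : ∀ u ∈ U, finRotate k u ∈ U) (a : Fin k)
    (ha : a ∈ U) (b : Fin k) : b ∈ U := by
  rcases k with _ | k
  · exact a.elim0
  have h0 : (0 : Fin (k + 1)) ∈ U ∧ True := by
    refine ⟨?_, trivial⟩
    have : ∀ t : ℕ, a.val + t < k + 1 → ∀ h : a.val + t < k + 1, (⟨a.val + t, h⟩ : Fin (k + 1)) ∈ U := by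
      intro t
      induction t with
      | zero => intro _ h; exact ha
      | succ t ih =>
        intro _ h
        have h3 := hU _ (ih (by omega) (by omega))
        rw [finRotate_of_lt (by omega)] at h3
        exact h3
    have hl := this (k - a.val) (by omega) (by omega)
    have h4 := hU _ hl
    have : (⟨a.val + (k - a.val), by omega⟩ : Fin (k + 1)) = Fin.last k := by
      ext; simp; omega
    rw [this, finRotate_last] at h4
    exact h4
  have : ∀ t : ℕ, ∀ h : t < k + 1, (⟨t, h⟩ : Fin (k + 1)) ∈ U := by
    intro t
    induction t with
    | zero => intro h; exact h0.1
    | succ t ih =>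
      intro h
      have h3 := hU _ (ih (by omega))
      rw [finRotate_of_lt (by omega)] at h3
      exact h3
  exact this b.1 b.2

lemma dat_model {n : ℕ} (ν : Fin n → ℕ) :
    Dat (univ : Finset (Σ i : Fin n, Fin (ν i)))
      (Equiv.sigmaCongrRight (fun i => finRotate (ν i))) Sigma.fst := by
  refine ⟨?_, ?_, ?_⟩
  · intro a ha; simp at ha
  · intro a; rfl
  · rintro U hU ⟨i, a⟩ _ ha ⟨j, b⟩ _ hl
    simp only at hl
    subst hl
    exact rot_closed {x | (⟨j, x⟩ : Σ i : Fin n, Fin (ν i)) ∈ U} (fun u hu => hU _ hu) a ha b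

lemma fib_model {n : ℕ} (ν : Fin n → ℕ) :
    fib (univ : Finset (Σ i : Fin n, Fin (ν i))) Sigma.fst = ν := by
  funext i
  have : (univ.filter (fun a : Σ i : Fin n, Fin (ν i) => a.1 = i)) =
      univ.map (Function.Embedding.sigmaMk (β := fun i => Fin (ν i)) i) := by
    ext ⟨j, b⟩
    simp only [Finset.mem_filter, Finset.mem_univ, true_and, Finset.mem_map,
      Function.Embedding.sigmaMk_apply]
    constructor
    · rintro rfl; exact ⟨b, rfl⟩
    · rintro ⟨c, hc⟩; exact (congrArg Sigma.fst hc).symm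
  unfold fib
  rw [this]; simp

end Pruning

/-- The pruning correspondence for simple Hurwitz numbers:
`Ĥ_{g,n}(μ) = Σ_{1 ≤ νᵢ ≤ μᵢ} K̂_{g,n}(ν) · Π μᵢ^(μᵢ-νᵢ)/(μᵢ-νᵢ)!` for `(g,n) ≠ (0,1)`. -/
theorem pruning_correspondence (H K : ℕ → Multiset ℕ → ℚ)
    (hH : IsNormalisedSimpleHurwitz H) (hK : IsNormalisedPrunedHurwitz K)
    (g n : ℕ) (hn : 1 ≤ n) (hne : ¬(g = 0 ∧ n = 1))
    (μ : Fin n → ℕ) (hμ : ∀ i, 1 ≤ μ i) :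
    H g (Multiset.map μ Finset.univ.val) =
      ∑ ν ∈ Fintype.piFinset (fun i => Finset.Icc 1 (μ i)),
        K g (Multiset.map ν Finset.univ.val) *
          ∏ i, (μ i : ℚ) ^ (μ i - ν i) / Nat.factorial (μ i - ν i) := by
  obtain ⟨e, he⟩ : ∃ e, 2 * g + n = e + 2 := ⟨2 * g + n - 2, by omega⟩
  refine Pruning.inversion μ hμ (fun l => H g (Multiset.map l Finset.univ.val))
    (fun l => K g (Multiset.map l Finset.univ.val)) ?_
  intro ν hν
  have hD := Pruning.dat_model ν
  have hF := Pruning.fib_model ν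
  have hf : ∀ i, 1 ≤ Pruning.fib (Finset.univ : Finset (Σ i : Fin n, Fin (ν i))) Sigma.fst i := by
    rw [hF]; exact hν
  have hk := (Pruning.hurwitz_eq H K hH hK he hD hf).2
  have hpos : 1 ≤ (Finset.univ : Finset (Σ i : Fin n, Fin (ν i))).card + e := by
    have h1 := Pruning.card_fib (Finset.univ : Finset (Σ i : Fin n, Fin (ν i))) Sigma.fst
    have h2 := hf ⟨0, hn⟩
    have h3 := Finset.single_le_sum (f := Pruning.fib (Finset.univ : Finset (Σ i : Fin n, Fin (ν i))) Sigma.fst)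
      (fun i _ => Nat.zero_le _) (Finset.mem_univ (⟨0, hn⟩ : Fin n))
    omega
  rw [Pruning.incl_excl _ _ Sigma.fst _ hpos, Finset.sum_div] at hk
  have hY := Pruning.main_Y (Sigma.fst : (Σ i : Fin n, Fin (ν i)) → Fin n) e
    (fun l => H g (Multiset.map l Finset.univ.val))
    (fun C T hD hf => (Pruning.hurwitz_eq H K hH hK he hD hf).1.symm)
  simp only [hF] at hk
  rw [hk]
  refine Finset.sum_congr rfl fun j hj => ?_
  have hY' := hY _ Finset.univ _ j rfl hD hf (by
    intro i
    rw [hF]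
    have := Fintype.mem_piFinset.1 hj i
    simp only [Finset.mem_range] at this
    omega)
  simp only [hF] at hY'
  rw [mul_div_assoc, hY']
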